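/- arXiv:2405.13682 — 2 statements merged into one kernel-verified Lean document; each statement's English description precedes it below -/
import Mathlib

section
/- Let G = Aff(m) = GL(m,ℝ) ⋉ ℝᵐ and, for λ ∈ ℂ, define π on L²(ℝᵐ) by π_{(A,b)}[f](x) := |det A|^{−λ} f(A⁻¹(x − b)). If Re(λ) = 1/2 (i.e., λ ∈ 1/2 + iℝ), then π is an irreducible unitary representation of G on L²(ℝᵐ): each π_g is unitary, π is a group homomorphism, and the only closed π-invariant subspaces of L²(ℝᵐ) are {0} and L²(ℝᵐ). -/
open MeasureTheory Matrix

/-!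
The Fourier transform turns the translation `T_c` into multiplication by a character, so if
`⟪T_c f, g⟫ = 0` for every `c`, then the integrable function `⟪𝓕 f, 𝓕 g⟫` has zero Fourier
transform and hence vanishes almost everywhere. A linear change of variables in `f` becomes a
linear change of variables in `𝓕 f`. If `g` is orthogonal to the whole orbit of `f` under the affine
group, then for every invertible `M` we have `𝓕 f (M ξ) = 0` or `𝓕 g ξ = 0` for almost every `ξ`.
Almost every matrix is invertible, so by Fubini there is, unless `𝓕 g = 0`, a nonzero `ξ` such that
`𝓕 f (M ξ) = 0` for almost every matrix `M`; since `M ↦ M ξ` is onto, `𝓕 f = 0`.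
-/

open FourierTransform Module SchwartzMap
open scoped ENNReal InnerProductSpace NNReal

section LinearPullback

variable {X Y Z F 𝕜 : Type*}
  [NormedAddCommGroup X] [NormedSpace ℝ X] [MeasurableSpace X] [BorelSpace X]
  [NormedAddCommGroup Y] [NormedSpace ℝ Y] [MeasurableSpace Y] [BorelSpace Y]
  [NormedAddCommGroup Z] [NormedSpace ℝ Z] [MeasurableSpace Z] [BorelSpace Z]

/-- The constant by which a linear homeomorphism rescales Haar measures: the image of `μ` under `L`
is `haarScaling μ ν L • ν`. -/
noncomputable def haarScaling (μ : Measure X) [μ.IsAddHaarMeasure] (ν : Measure Y)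
    [ν.IsAddHaarMeasure] (L : X ≃L[ℝ] Y) : ℝ≥0 :=
  (μ.map L).addHaarScalarFactor ν

variable (μ : Measure X) [μ.IsAddHaarMeasure] (ν : Measure Y) [ν.IsAddHaarMeasure]
  (ρ : Measure Z) [ρ.IsAddHaarMeasure]

lemma haarScaling_pos (L : X ≃L[ℝ] Y) : 0 < haarScaling μ ν L :=
  Measure.addHaarScalarFactor_pos_of_isAddHaarMeasure _ _

variable [FiniteDimensional ℝ Y]

lemma measurePreserving_haarScaling_smul (L : X ≃L[ℝ] Y) :
    MeasurePreserving L μ (haarScaling μ ν L • ν) :=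
  ⟨L.continuous.measurable, Measure.isAddLeftInvariant_eq_smul _ ν⟩

lemma quasiMeasurePreserving_continuousLinearEquiv (L : X ≃L[ℝ] Y) :
    Measure.QuasiMeasurePreserving L μ ν :=
  (measurePreserving_haarScaling_smul μ ν L).quasiMeasurePreserving.mono_right
    Measure.smul_absolutelyContinuous

lemma haarScaling_self [FiniteDimensional ℝ X] (L : X ≃L[ℝ] X) :
    (haarScaling μ μ L : ℝ) = |LinearMap.det (L : X →ₗ[ℝ] X)|⁻¹ := by
  have hdet : LinearMap.det (L : X →ₗ[ℝ] X) ≠ 0 := L.toLinearEquiv.isUnit_det'.ne_zero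
  have hmap := Measure.map_linearMap_addHaar_eq_smul_addHaar μ hdet
  have hball := DFunLike.congr_fun
    ((measurePreserving_haarScaling_smul μ μ L).map_eq.symm.trans hmap) (Metric.ball 0 1)
  simp only [Measure.smul_apply, ENNReal.smul_def, smul_eq_mul, abs_inv] at hball
  have hofReal := (ENNReal.mul_left_inj (Metric.measure_ball_pos μ 0 one_pos).ne'
    measure_ball_lt_top.ne).1 hball
  simpa using congr_arg ENNReal.toReal hofReal

lemma integral_comp_continuousLinearEquiv [NormedAddCommGroup F] [NormedSpace ℝ F]
    (L : X ≃L[ℝ] Y) (u : Y → F) :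
    ∫ x, u (L x) ∂μ = haarScaling μ ν L • ∫ y, u y ∂ν := by
  rw [(measurePreserving_haarScaling_smul μ ν L).integral_comp
    L.toHomeomorph.measurableEmbedding, integral_smul_nnreal_measure]

variable {μ ν ρ} [NormedAddCommGroup F] {p : ℝ≥0∞}

lemma memLp_comp_continuousLinearEquiv (L : X ≃L[ℝ] Y) {u : Y → F} (hu : MemLp u p ν) :
    MemLp (u ∘ L) p μ :=
  (hu.smul_measure ENNReal.coe_ne_top).comp_measurePreserving
    (measurePreserving_haarScaling_smul μ ν L)

lemma eLpNorm_comp_continuousLinearEquiv (L : X ≃L[ℝ] Y) {u : Y → F}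
    (hu : AEStronglyMeasurable u ν) :
    eLpNorm (u ∘ L) p μ = haarScaling μ ν L ^ p.toReal⁻¹ • eLpNorm u p ν := by
  rw [eLpNorm_comp_measurePreserving (hu.smul_measure _)
    (measurePreserving_haarScaling_smul μ ν L)]
  exact eLpNorm_smul_measure_of_ne_zero' (haarScaling_pos μ ν L).ne' u p ν

lemma norm_toLp_comp_continuousLinearEquiv (L : X ≃L[ℝ] Y) (f : Lp F p ν) :
    ‖(memLp_comp_continuousLinearEquiv (μ := μ) L (Lp.memLp f)).toLp (f ∘ L)‖ =
      (haarScaling μ ν L : ℝ) ^ p.toReal⁻¹ * ‖f‖ := by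
  rw [Lp.norm_toLp, eLpNorm_comp_continuousLinearEquiv L (Lp.aestronglyMeasurable f),
    ENNReal.toReal_smul, NNReal.smul_def, NNReal.coe_rpow, smul_eq_mul, Lp.norm_def]

variable [NormedField 𝕜] [NormedSpace 𝕜 F] [Fact (1 ≤ p)]

variable (𝕜 p μ) in
/-- Precomposition with a linear homeomorphism `L : X → Y`, as an operator `Lᵖ(Y) → Lᵖ(X)`. It is
bounded because `L` only rescales Haar measure. -/
noncomputable def linearPullback (L : X ≃L[ℝ] Y) : Lp F p ν →L[𝕜] Lp F p μ :=
  LinearMap.mkContinuous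
    { toFun f := (memLp_comp_continuousLinearEquiv L (Lp.memLp f)).toLp _
      map_add' f g := by
        rw [← MemLp.toLp_add]
        exact MemLp.toLp_congr _ _
          ((quasiMeasurePreserving_continuousLinearEquiv μ ν L).ae_eq_comp (Lp.coeFn_add f g))
      map_smul' a f := by
        rw [RingHom.id_apply, ← MemLp.toLp_const_smul]
        exact MemLp.toLp_congr _ _
          ((quasiMeasurePreserving_continuousLinearEquiv μ ν L).ae_eq_comp (Lp.coeFn_smul a f)) }
    ((haarScaling μ ν L : ℝ) ^ p.toReal⁻¹) fun f => (norm_toLp_comp_continuousLinearEquiv L f).le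

lemma coeFn_linearPullback (L : X ≃L[ℝ] Y) (f : Lp F p ν) :
    linearPullback 𝕜 μ p L f =ᵐ[μ] fun x => f (L x) :=
  (memLp_comp_continuousLinearEquiv L (Lp.memLp f)).coeFn_toLp

lemma norm_linearPullback (L : X ≃L[ℝ] Y) (f : Lp F p ν) :
    ‖linearPullback 𝕜 μ p L f‖ = (haarScaling μ ν L : ℝ) ^ p.toReal⁻¹ * ‖f‖ :=
  norm_toLp_comp_continuousLinearEquiv L f

lemma linearPullback_injective (L : X ≃L[ℝ] Y) :
    Function.Injective (linearPullback 𝕜 μ p L : Lp F p ν →L[𝕜] Lp F p μ) := by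
  refine (injective_iff_map_eq_zero _).2 fun f hf => ?_
  have hpow := Real.rpow_pos_of_pos (NNReal.coe_pos.2 (haarScaling_pos μ ν L)) p.toReal⁻¹
  simpa [hf, hpow.ne'] using norm_linearPullback (𝕜 := 𝕜) (μ := μ) L f

lemma linearPullback_linearPullback [FiniteDimensional ℝ Z] (L : X ≃L[ℝ] Y) (M : Y ≃L[ℝ] Z)
    (f : Lp F p ρ) :
    linearPullback 𝕜 μ p L (linearPullback 𝕜 ν p M f) = linearPullback 𝕜 μ p (L.trans M) f := by
  apply Lp.ext
  filter_upwards [coeFn_linearPullback (𝕜 := 𝕜) (μ := μ) L (linearPullback 𝕜 ν p M f),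
    (quasiMeasurePreserving_continuousLinearEquiv μ ν L).ae
      (coeFn_linearPullback (𝕜 := 𝕜) (μ := ν) M f),
    coeFn_linearPullback (𝕜 := 𝕜) (μ := μ) (L.trans M) f] with x hL hM hLM
  rw [hL, hM, hLM, ContinuousLinearEquiv.trans_apply]

lemma linearPullback_vadd (L : X ≃L[ℝ] Y) (c : Y) (f : Lp F p ν) :
    linearPullback 𝕜 μ p L (DomAddAct.mk c +ᵥ f) =
      DomAddAct.mk (L.symm c) +ᵥ linearPullback 𝕜 μ p L f := by
  apply Lp.ext
  filter_upwards [coeFn_linearPullback (𝕜 := 𝕜) (μ := μ) L (DomAddAct.mk c +ᵥ f),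
    (quasiMeasurePreserving_continuousLinearEquiv μ ν L).ae
      (DomAddAct.vadd_Lp_ae_eq (DomAddAct.mk c) f),
    DomAddAct.vadd_Lp_ae_eq (DomAddAct.mk (L.symm c)) (linearPullback 𝕜 μ p L f),
    (measurePreserving_add_left μ (L.symm c)).quasiMeasurePreserving.ae
      (coeFn_linearPullback (𝕜 := 𝕜) (μ := μ) L f)] with x hL hc hc' hL'
  rw [hL, hc, hc']
  simpa using hL'.symm

lemma inner_linearPullback {H : Type*} [NormedAddCommGroup H] [InnerProductSpace ℂ H]
    (L : X ≃L[ℝ] Y) (f g : Lp H 2 ν) :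
    ⟪linearPullback ℂ μ 2 L f, linearPullback ℂ μ 2 L g⟫_ℂ = haarScaling μ ν L * ⟪f, g⟫_ℂ := by
  rw [L2.inner_def, L2.inner_def]
  have hae : ∀ᵐ x ∂μ, ⟪linearPullback ℂ μ 2 L f x, linearPullback ℂ μ 2 L g x⟫_ℂ =
      ⟪f (L x), g (L x)⟫_ℂ := by
    filter_upwards [coeFn_linearPullback (𝕜 := ℂ) (μ := μ) L f,
      coeFn_linearPullback (𝕜 := ℂ) (μ := μ) L g] with x hf hg
    rw [hf, hg]
  rw [integral_congr_ae hae, integral_comp_continuousLinearEquiv μ ν L fun y => ⟪f y, g y⟫_ℂ,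
    NNReal.smul_def, Complex.real_smul]

end LinearPullback

lemma continuous_const_lpSMul {α R F : Type*} [MeasurableSpace α] {μ : Measure α}
    {p q r : ℝ≥0∞} [Fact (1 ≤ q)] [Fact (1 ≤ r)] [p.HolderTriple q r] [NormedRing R]
    [NormedAddCommGroup F] [Module R F] [IsBoundedSMul R F] (a : Lp R p μ) :
    Continuous fun f : Lp F q μ => (a • f : Lp F r μ) :=
  AddMonoidHomClass.continuous_of_bound
    (AddMonoidHom.mk' (fun f : Lp F q μ => (a • f : Lp F r μ)) (Lp.add_smul a)) ‖a‖
    fun f => Lp.norm_smul_le a f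

section Fourier

variable {E F : Type*} [NormedAddCommGroup E] [InnerProductSpace ℝ E] [FiniteDimensional ℝ E]
  [MeasurableSpace E] [BorelSpace E] [NormedAddCommGroup F]

-- The self-adjointness of `𝓕` moves the hypothesis onto Schwartz functions, so that `u` vanishes as
-- a tempered distribution.
lemma ae_eq_zero_of_fourier_eq_zero [NormedSpace ℂ F] [CompleteSpace F] {u : E → F}
    (hu : Integrable u) (hzero : 𝓕 u = 0) : u =ᵐ[volume] 0 := by
  have hu₁ : MemLp u 1 := memLp_one_iff_integrable.2 hu
  have hpairing (s : 𝓢(E, ℂ)) : ∫ x, s x • u x = 0 := by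
    have hflip := VectorFourier.integral_bilin_fourierIntegral_eq_flip
      (μ := (volume : Measure E)) (ν := volume) (L := innerₗ E) (ContinuousLinearMap.lsmul ℂ ℂ)
      Real.continuous_fourierChar (by simp only [innerₗ_apply_apply]; fun_prop)
      (𝓕⁻ s : 𝓢(E, ℂ)).integrable hu
    rw [flip_innerₗ] at hflip
    change ∫ ξ, 𝓕 ((𝓕⁻ s : 𝓢(E, ℂ)) : E → ℂ) ξ • u ξ =
      ∫ x, (𝓕⁻ s : 𝓢(E, ℂ)) x • 𝓕 u x at hflip
    simpa [← fourier_coe, hzero] using hflip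
  have hmem : hu₁.toLp u ∈ (Lp.toTemperedDistributionCLM F (volume : Measure E) 1).ker := by
    refine LinearMap.mem_ker.2 (ContinuousLinearMap.ext fun s => ?_)
    have : ∫ x, s x • hu₁.toLp u x = ∫ x, s x • u x :=
      integral_congr_ae (hu₁.coeFn_toLp.mono fun x hx => by simp only [hx])
    exact (Lp.toTemperedDistribution_apply _ s).trans (this.trans (hpairing s))
  rw [Lp.ker_toTemperedDistributionCLM_eq_bot, Submodule.mem_bot] at hmem
  exact (hu₁.toLp_eq_toLp_iff MemLp.zero).1 hmem

variable [InnerProductSpace ℂ F]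

lemma eq_of_eq_toLp_schwartz {G : Type*} [TopologicalSpace G] [T2Space G]
    {S T : Lp F 2 (volume : Measure E) → G} (hS : Continuous S) (hT : Continuous T)
    (h : ∀ s : 𝓢(E, F), S (s.toLp 2) = T (s.toLp 2)) : S = T :=
  (denseRange_toLpCLM (p := 2) ENNReal.ofNat_ne_top).equalizer hS hT (funext h)

variable [CompleteSpace F]

/-- The unimodular character `ξ ↦ exp (2πi ⟪c, ξ⟫)` as a bounded function. -/
noncomputable def characterLp (c : E) : Lp ℂ ∞ (volume : Measure E) :=
  (memLp_top_of_bound (f := fun ξ : E => (Real.fourierChar ⟪c, ξ⟫_ℝ : ℂ))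
    (by have := Real.continuous_fourierChar; fun_prop) 1
    (Filter.Eventually.of_forall fun ξ => (Circle.norm_coe _).le)).toLp _

lemma coeFn_characterLp (c : E) :
    characterLp c =ᵐ[volume] fun ξ => (Real.fourierChar ⟪c, ξ⟫_ℝ : ℂ) :=
  MemLp.coeFn_toLp _

lemma fourier_vadd_eq_smul (c : E) (f : Lp F 2 (volume : Measure E)) :
    𝓕 (DomAddAct.mk c +ᵥ f) = characterLp c • 𝓕 f := by
  refine congr_fun (eq_of_eq_toLp_schwartz (S := fun f => 𝓕 (DomAddAct.mk c +ᵥ f))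
    (T := fun f => (characterLp c • 𝓕 f : Lp F 2 (volume : Measure E))) (by fun_prop)
    ((continuous_const_lpSMul _).comp (by fun_prop)) fun s => ?_) f
  have hcomp : DomAddAct.mk c +ᵥ s.toLp 2 volume = (compSubConstCLM ℂ (-c) s).toLp 2 := by
    apply Lp.ext
    filter_upwards [DomAddAct.vadd_Lp_ae_eq (DomAddAct.mk c) (s.toLp 2 volume),
      (measurePreserving_add_left volume c).quasiMeasurePreserving.ae (s.coeFn_toLp 2 volume),
      (compSubConstCLM ℂ (-c) s).coeFn_toLp 2 volume] with x hc hs hsc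
    rw [hc, hsc]
    simpa [add_comm] using hs
  rw [hcomp, toLp_fourier_eq, toLp_fourier_eq]
  apply Lp.ext
  filter_upwards [(𝓕 (compSubConstCLM ℂ (-c) s)).coeFn_toLp 2 volume,
    Lp.coeFn_lpSMul (r := 2) (characterLp c) ((𝓕 s).toLp 2), coeFn_characterLp c,
    (𝓕 s).coeFn_toLp 2 volume] with ξ hleft hsmul hχ hs
  have hshift : ⇑(compSubConstCLM ℂ (-c) s) = s ∘ fun x => x + c := by
    ext x
    simp
  rw [hleft, hsmul, Pi.smul_apply', hχ, hs, fourier_coe, fourier_coe, hshift]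
  exact congr_fun (VectorFourier.fourierIntegral_comp_add_right Real.fourierChar
    (volume : Measure E) (innerₗ E) s c) ξ

lemma fourier_linearPullback (L M : E ≃L[ℝ] E) (hLM : ∀ x y, ⟪L x, M y⟫_ℝ = ⟪x, y⟫_ℝ)
    (f : Lp F 2 (volume : Measure E)) :
    𝓕 (linearPullback ℂ volume 2 L f) =
      (haarScaling volume volume L : ℂ) • linearPullback ℂ volume 2 M (𝓕 f) := by
  refine congr_fun (eq_of_eq_toLp_schwartz (S := fun f => 𝓕 (linearPullback ℂ volume 2 L f))
    (T := fun f => (haarScaling volume volume L : ℂ) • linearPullback ℂ volume 2 M (𝓕 f))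
    (by fun_prop) (by fun_prop) fun s => ?_) f
  have hcomp : linearPullback ℂ volume 2 L (s.toLp 2) =
      (compCLMOfContinuousLinearEquiv ℂ L s).toLp 2 := by
    apply Lp.ext
    filter_upwards [coeFn_linearPullback (𝕜 := ℂ) (μ := volume) L (s.toLp 2 volume),
      (quasiMeasurePreserving_continuousLinearEquiv volume volume L).ae (s.coeFn_toLp 2 volume),
      (compCLMOfContinuousLinearEquiv ℂ L s).coeFn_toLp 2 volume] with x hL hs hsL
    rw [hL, hs, hsL, compCLMOfContinuousLinearEquiv_apply, Function.comp_apply]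
  rw [hcomp, toLp_fourier_eq, toLp_fourier_eq]
  apply Lp.ext
  filter_upwards [(𝓕 (compCLMOfContinuousLinearEquiv ℂ L s)).coeFn_toLp 2 volume,
    Lp.coeFn_smul (haarScaling volume volume L : ℂ) (linearPullback ℂ volume 2 M ((𝓕 s).toLp 2)),
    coeFn_linearPullback (𝕜 := ℂ) (μ := volume) M ((𝓕 s).toLp 2 volume),
    (quasiMeasurePreserving_continuousLinearEquiv volume volume M).ae
      ((𝓕 s).coeFn_toLp 2 volume)] with ξ hleft hsmul hM hs
  rw [hleft, hsmul, Pi.smul_apply, hM, hs, fourier_coe, fourier_coe, Real.fourier_eq,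
    Real.fourier_eq, Complex.coe_smul, ← NNReal.smul_def,
    ← integral_comp_continuousLinearEquiv]
  simp only [hLM, compCLMOfContinuousLinearEquiv_apply, Function.comp_apply]

lemma fourier_inner_fourier (f g : Lp F 2 (volume : Measure E)) (c : E) :
    𝓕 (fun ξ => ⟪(𝓕 f : Lp F 2 (volume : Measure E)) ξ,
      (𝓕 g : Lp F 2 (volume : Measure E)) ξ⟫_ℂ) c = ⟪DomAddAct.mk c +ᵥ f, g⟫_ℂ := by
  rw [← Lp.inner_fourier_eq, L2.inner_def, Real.fourier_eq]
  refine integral_congr_ae ?_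
  rw [fourier_vadd_eq_smul]
  filter_upwards [Lp.coeFn_lpSMul (r := 2) (characterLp c) (𝓕 f), coeFn_characterLp c]
    with ξ hsmul hχ
  rw [hsmul, Pi.smul_apply', hχ, inner_smul_left, ← Circle.coe_inv_eq_conj,
    ← AddChar.map_neg_eq_inv, real_inner_comm, Circle.smul_def, smul_eq_mul]

lemma ae_inner_fourier_eq_zero {f g : Lp F 2 (volume : Measure E)}
    (h : ∀ c : E, ⟪DomAddAct.mk c +ᵥ f, g⟫_ℂ = 0) :
    ∀ᵐ ξ, ⟪(𝓕 f : Lp F 2 (volume : Measure E)) ξ, (𝓕 g : Lp F 2 (volume : Measure E)) ξ⟫_ℂ = 0 :=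
  ae_eq_zero_of_fourier_eq_zero (L2.integrable_inner (𝕜 := ℂ) (𝓕 f) (𝓕 g))
    (funext fun c => (fourier_inner_fourier f g c).trans (h c))

end Fourier

section GenericLinearMap

lemma finite_spectrum_of_isIntegral {K A : Type*} [Field K] [Ring A] [Algebra K A] {a : A}
    (ha : IsIntegral K a) : (spectrum K a).Finite := by
  classical
  nontriviality A
  refine (minpoly K a).roots.toFinset.finite_toSet.subset fun r hr => ?_
  have hroot : (minpoly K a).eval r ∈ spectrum K (Polynomial.aeval a (minpoly K a)) :=
    spectrum.subset_polynomial_aeval a (minpoly K a) ⟨r, hr, rfl⟩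
  rw [minpoly.aeval, spectrum.zero_eq, Set.mem_singleton_iff] at hroot
  simpa [minpoly.ne_zero ha] using hroot

-- A line `a + ℝ • 1` meets the non-units only at the finitely many points of the spectrum of `-a`.
lemma ae_isUnit {A : Type*} [NormedRing A] [NormedAlgebra ℝ A] [FiniteDimensional ℝ A]
    [MeasurableSpace A] [BorelSpace A] (μ : Measure A) [μ.IsAddHaarMeasure] :
    ∀ᵐ a ∂μ, IsUnit a := by
  have : CompleteSpace A := FiniteDimensional.complete ℝ A
  refine ae_mem_of_ae_add_linearMap_mem (Algebra.linearMap ℝ A) volume μ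
    Units.isOpen.measurableSet fun a => ?_
  have hfin := finite_spectrum_of_isIntegral (Algebra.IsIntegral.isIntegral (R := ℝ) (-a))
  filter_upwards [hfin.countable.ae_notMem volume] with r hr
  change IsUnit (a + algebraMap ℝ A r)
  simpa [add_comm] using spectrum.notMem_iff.1 hr

variable {X : Type*} [NormedAddCommGroup X] [NormedSpace ℝ X] [FiniteDimensional ℝ X]
  [MeasurableSpace X] [BorelSpace X] (μ : Measure X) [μ.IsAddHaarMeasure]

lemma ae_apply_mem_iff {x : X} (hx : x ≠ 0) (ν : Measure (X →L[ℝ] X)) [ν.IsAddHaarMeasure]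
    {s : Set X} (hs : MeasurableSet s) : (∀ᵐ N ∂ν, N x ∈ s) ↔ ∀ᵐ y ∂μ, y ∈ s := by
  have hsurj : Function.Surjective fun N : X →L[ℝ] X => N x := fun y => by
    obtain ⟨φ, hφ⟩ := SeparatingDual.exists_eq_one (R := ℝ) hx
    exact ⟨φ.smulRight y, by simp [hφ]⟩
  exact ae_comp_linearMap_mem_iff (ContinuousLinearMap.apply ℝ X x).toLinearMap ν μ hsurj hs

lemma ae_mem_or_ae_mem_of_forall_ae {s t : Set X} (hs : MeasurableSet s) (ht : MeasurableSet t)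
    (h : ∀ M : X ≃L[ℝ] X, ∀ᵐ x ∂μ, M x ∈ s ∨ x ∈ t) :
    (∀ᵐ x ∂μ, x ∈ s) ∨ ∀ᵐ x ∂μ, x ∈ t := by
  rcases subsingleton_or_nontrivial X with hX | hX
  · obtain ⟨y, hy⟩ := (h (.refl ℝ X)).exists
    exact hy.imp (fun hys => .of_forall fun x => Subsingleton.elim y x ▸ hys)
      fun hyt => .of_forall fun x => Subsingleton.elim y x ▸ hyt
  let ν : Measure (X →L[ℝ] X) := Measure.addHaar
  have hunit : ∀ᵐ N ∂ν, ∀ᵐ x ∂μ, N x ∈ s ∨ x ∈ t := by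
    filter_upwards [ae_isUnit ν] with N hN
    exact h (.ofUnit hN.unit)
  have hmeas : MeasurableSet {q : (X →L[ℝ] X) × X | q.1 q.2 ∈ s ∨ q.2 ∈ t} :=
    (ContinuousLinearMap.measurable_apply₂ hs).union (measurable_snd ht)
  rw [Measure.ae_ae_comm hmeas] at hunit
  by_cases hst : ∀ᵐ x ∂μ, x ∈ t
  · exact .inr hst
  obtain ⟨x, hxt, hx, hx0⟩ := ((Filter.not_eventually.1 hst).and_eventually
    (hunit.and (Measure.ae_ne μ 0))).exists
  exact .inl ((ae_apply_mem_iff μ hx0 ν hs).1 (hx.mono fun N hN => hN.resolve_right hxt))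

end GenericLinearMap

section Irreducibility

section InnerProductSpace

variable {E : Type*} [NormedAddCommGroup E] [InnerProductSpace ℝ E] [FiniteDimensional ℝ E]

lemma exists_contragredient (M : E ≃L[ℝ] E) :
    ∃ L : E ≃L[ℝ] E, ∀ x y, ⟪L x, M y⟫_ℝ = ⟪x, y⟫_ℝ := by
  have : CompleteSpace E := FiniteDimensional.complete ℝ E
  refine ⟨.equivOfInverse (ContinuousLinearMap.adjoint (M.symm : E →L[ℝ] E))
    (ContinuousLinearMap.adjoint (M : E →L[ℝ] E)) (fun x => ?_) fun x => ?_, fun x y => ?_⟩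
  · exact ext_inner_right ℝ fun y => by simp [ContinuousLinearMap.adjoint_inner_left]
  · exact ext_inner_right ℝ fun y => by simp [ContinuousLinearMap.adjoint_inner_left]
  · simp [ContinuousLinearMap.adjoint_inner_left]

variable [MeasurableSpace E] [BorelSpace E]

lemma ae_fourier_apply_eq_zero_or {f g : Lp ℂ 2 (volume : Measure E)}
    (h : ∀ (L : E ≃L[ℝ] E) (c : E),
      ⟪DomAddAct.mk c +ᵥ linearPullback ℂ volume 2 L f, g⟫_ℂ = 0) (M : E ≃L[ℝ] E) :
    ∀ᵐ ξ, (𝓕 f : Lp ℂ 2 (volume : Measure E)) (M ξ) = 0 ∨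
      (𝓕 g : Lp ℂ 2 (volume : Measure E)) ξ = 0 := by
  obtain ⟨L, hLM⟩ := exists_contragredient M
  have hortho := ae_inner_fourier_eq_zero (h L)
  rw [fourier_linearPullback L M hLM] at hortho
  have hc : haarScaling (volume : Measure E) volume L ≠ 0 := (haarScaling_pos _ _ L).ne'
  filter_upwards [hortho, Lp.coeFn_smul (haarScaling (volume : Measure E) volume L : ℂ)
    (linearPullback ℂ volume 2 M (𝓕 f)), coeFn_linearPullback (𝕜 := ℂ) (μ := volume) M (𝓕 f)]
    with ξ hξ hsmul hM
  rw [hsmul, Pi.smul_apply, hM] at hξ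
  simpa [hc, or_comm] using hξ

lemma euclidean_eq_zero_or_eq_zero {f g : Lp ℂ 2 (volume : Measure E)}
    (h : ∀ (L : E ≃L[ℝ] E) (c : E),
      ⟪DomAddAct.mk c +ᵥ linearPullback ℂ volume 2 L f, g⟫_ℂ = 0) :
    f = 0 ∨ g = 0 := by
  have hmeas (u : Lp ℂ 2 (volume : Measure E)) : MeasurableSet {ξ | u ξ = 0} :=
    (Lp.stronglyMeasurable u).measurable (measurableSet_singleton 0)
  have hzero (u : Lp ℂ 2 (volume : Measure E))
      (hu : ∀ᵐ ξ, (𝓕 u : Lp ℂ 2 (volume : Measure E)) ξ = 0) : u = 0 := by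
    rw [← norm_eq_zero, ← Lp.norm_fourier_eq, norm_eq_zero]
    exact (Lp.eq_zero_iff_ae_eq_zero).2 hu
  exact (ae_mem_or_ae_mem_of_forall_ae volume (hmeas (𝓕 f)) (hmeas (𝓕 g))
    (ae_fourier_apply_eq_zero_or h)).imp (hzero f) (hzero g)

end InnerProductSpace

variable {X : Type*} [NormedAddCommGroup X] [NormedSpace ℝ X] [FiniteDimensional ℝ X]
  [MeasurableSpace X] [BorelSpace X] {μ : Measure X} [μ.IsAddHaarMeasure]

lemma eq_zero_or_eq_zero_of_inner_affine_eq_zero {f g : Lp ℂ 2 μ}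
    (h : ∀ (L : X ≃L[ℝ] X) (c : X), ⟪DomAddAct.mk c +ᵥ linearPullback ℂ μ 2 L f, g⟫_ℂ = 0) :
    f = 0 ∨ g = 0 := by
  let e : EuclideanSpace ℝ (Fin (finrank ℝ X)) ≃L[ℝ] X := toEuclidean.symm
  let P : Lp ℂ 2 μ →L[ℂ] Lp ℂ 2 volume := linearPullback ℂ volume 2 e
  have hP : ∀ u, P u = 0 → u = 0 := (injective_iff_map_eq_zero P).1 (linearPullback_injective e)
  refine (euclidean_eq_zero_or_eq_zero (f := P f) (g := P g) fun L c => ?_).imp (hP f) (hP g)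
  have hconj : linearPullback ℂ volume 2 L (P f) =
      P (linearPullback ℂ μ 2 (e.symm.trans (L.trans e)) f) := by
    have htrans : e.trans (e.symm.trans (L.trans e)) = L.trans e := by
      ext x
      simp
    simp only [P, linearPullback_linearPullback, htrans]
  rw [hconj, ← e.symm_apply_apply c, ← linearPullback_vadd, inner_linearPullback, h, mul_zero]

theorem eq_bot_or_eq_top_of_affine_invariant {V : Submodule ℂ (Lp ℂ 2 μ)}
    (hV : IsClosed (V : Set (Lp ℂ 2 μ)))
    (hinv : ∀ (L : X ≃L[ℝ] X) (c : X), ∀ f ∈ V, DomAddAct.mk c +ᵥ linearPullback ℂ μ 2 L f ∈ V) :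
    V = ⊥ ∨ V = ⊤ := by
  have : CompleteSpace V := hV.completeSpace_coe
  refine or_iff_not_imp_left.2 fun hbot => ?_
  obtain ⟨f, hfV, hf⟩ := Submodule.exists_mem_ne_zero_of_ne_bot hbot
  rw [← Submodule.orthogonal_eq_bot_iff, Submodule.eq_bot_iff]
  intro g hg
  refine (eq_zero_or_eq_zero_of_inner_affine_eq_zero fun L c => ?_).resolve_left hf
  exact (Submodule.mem_orthogonal V g).1 hg _ (hinv L c f hfV)

end Irreducibility

section AffineOperator

variable {X : Type*} [NormedAddCommGroup X] [NormedSpace ℝ X] [FiniteDimensional ℝ X]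
  [MeasurableSpace X] [BorelSpace X] {μ : Measure X} [μ.IsAddHaarMeasure]

variable (μ) in
/-- The operator `f ↦ |det L| ^ (-lam) f (L⁻¹ (x - b))` by which the affine map `x ↦ L x + b` acts
on `L²`. -/
noncomputable def affineOperator (lam : ℂ) (L : X ≃L[ℝ] X) (b : X) : Lp ℂ 2 μ →L[ℂ] Lp ℂ 2 μ :=
  ((|LinearMap.det (L : X →ₗ[ℝ] X)| : ℝ) : ℂ) ^ (-lam) •
    (Lp.compMeasurePreservingₗᵢ ℂ _ (measurePreserving_vadd (-b) μ)).toContinuousLinearMap ∘L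
      linearPullback ℂ μ 2 L.symm

lemma affineOperator_apply (lam : ℂ) (L : X ≃L[ℝ] X) (b : X) (f : Lp ℂ 2 μ) :
    affineOperator μ lam L b f = ((|LinearMap.det (L : X →ₗ[ℝ] X)| : ℝ) : ℂ) ^ (-lam) •
      (DomAddAct.mk (-b) +ᵥ linearPullback ℂ μ 2 L.symm f) :=
  rfl

lemma coeFn_affineOperator (lam : ℂ) (L : X ≃L[ℝ] X) (b : X) (f : Lp ℂ 2 μ) :
    affineOperator μ lam L b f =ᵐ[μ]
      fun x => ((|LinearMap.det (L : X →ₗ[ℝ] X)| : ℝ) : ℂ) ^ (-lam) * f (L.symm (x - b)) := by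
  rw [affineOperator_apply]
  filter_upwards [Lp.coeFn_smul (((|LinearMap.det (L : X →ₗ[ℝ] X)| : ℝ) : ℂ) ^ (-lam))
      (DomAddAct.mk (-b) +ᵥ linearPullback ℂ μ 2 L.symm f),
    DomAddAct.vadd_Lp_ae_eq (DomAddAct.mk (-b)) (linearPullback ℂ μ 2 L.symm f),
    (measurePreserving_add_left μ (-b)).quasiMeasurePreserving.ae
      (coeFn_linearPullback (𝕜 := ℂ) (μ := μ) L.symm f)] with x hsmul hb hL
  rw [hsmul, Pi.smul_apply, hb, smul_eq_mul, sub_eq_neg_add]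
  exact congr_arg _ hL

lemma norm_affineOperator {lam : ℂ} (hlam : lam.re = 1 / 2) (L : X ≃L[ℝ] X) (b : X)
    (f : Lp ℂ 2 μ) : ‖affineOperator μ lam L b f‖ = ‖f‖ := by
  have hdet_pos : 0 < |LinearMap.det (L : X →ₗ[ℝ] X)| :=
    abs_pos.2 L.toLinearEquiv.isUnit_det'.ne_zero
  have hscaling : (haarScaling μ μ L.symm : ℝ) = |LinearMap.det (L : X →ₗ[ℝ] X)| := by
    rw [haarScaling_self, ← abs_inv]
    exact congr_arg _ (inv_eq_of_mul_eq_one_left L.toLinearEquiv.det_mul_det_symm)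
  rw [affineOperator_apply, norm_smul, DomAddAct.norm_vadd_Lp, norm_linearPullback, hscaling,
    Complex.norm_cpow_eq_rpow_re_of_pos hdet_pos, ← mul_assoc, ← Real.rpow_add hdet_pos]
  simp [hlam]

lemma affineOperator_refl_zero (lam : ℂ) :
    affineOperator μ lam (.refl ℝ X) 0 = .id ℂ (Lp ℂ 2 μ) := by
  ext1 f
  apply Lp.ext
  filter_upwards [coeFn_affineOperator lam (.refl ℝ X) 0 f] with x hx
  have hdet : LinearMap.det (ContinuousLinearEquiv.refl ℝ X : X →ₗ[ℝ] X) = 1 := LinearMap.det_id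
  rw [hx, hdet]
  simp

lemma affineOperator_trans (lam : ℂ) (L₁ L₂ : X ≃L[ℝ] X) (b₁ b₂ : X) :
    affineOperator μ lam (L₂.trans L₁) (L₁ b₂ + b₁) =
      affineOperator μ lam L₁ b₁ ∘L affineOperator μ lam L₂ b₂ := by
  ext1 f
  have hdet : LinearMap.det (L₂.trans L₁ : X →ₗ[ℝ] X) =
      LinearMap.det (L₁ : X →ₗ[ℝ] X) * LinearMap.det (L₂ : X →ₗ[ℝ] X) := LinearMap.det_comp _ _
  apply Lp.ext
  filter_upwards [coeFn_affineOperator lam (L₂.trans L₁) (L₁ b₂ + b₁) f,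
    coeFn_affineOperator lam L₁ b₁ (affineOperator μ lam L₂ b₂ f),
    ((quasiMeasurePreserving_continuousLinearEquiv μ μ L₁.symm).comp
      (measurePreserving_sub_right μ b₁).quasiMeasurePreserving).ae
        (coeFn_affineOperator lam L₂ b₂ f)] with x htrans h₁ h₂
  rw [htrans, ContinuousLinearMap.comp_apply, h₁]
  simp only [Function.comp_apply] at h₂
  rw [h₂, hdet, abs_mul, Complex.ofReal_mul,
    Complex.mul_cpow_ofReal_nonneg (abs_nonneg _) (abs_nonneg _), mul_assoc]
  simp [sub_add_eq_sub_sub_swap]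

lemma affineOperator_bijective (lam : ℂ) (L : X ≃L[ℝ] X) (b : X) :
    Function.Bijective (affineOperator μ lam L b) := by
  have hright := affineOperator_trans (μ := μ) lam L L.symm b (-L.symm b)
  have hleft := affineOperator_trans (μ := μ) lam L.symm L (-L.symm b) b
  simp only [map_neg, ContinuousLinearEquiv.apply_symm_apply, neg_add_cancel, add_neg_cancel,
    ContinuousLinearEquiv.symm_trans_self, ContinuousLinearEquiv.self_trans_symm,
    affineOperator_refl_zero] at hright hleft
  exact Function.bijective_iff_has_inverse.2 ⟨affineOperator μ lam L.symm (-L.symm b),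
    DFunLike.congr_fun hleft.symm, DFunLike.congr_fun hright.symm⟩

theorem eq_bot_or_eq_top_of_affineOperator_invariant (lam : ℂ) {V : Submodule ℂ (Lp ℂ 2 μ)}
    (hV : IsClosed (V : Set (Lp ℂ 2 μ)))
    (hinv : ∀ L b, ∀ f ∈ V, affineOperator μ lam L b f ∈ V) : V = ⊥ ∨ V = ⊤ := by
  refine eq_bot_or_eq_top_of_affine_invariant hV fun L c f hf => ?_
  have hscalar : ((|LinearMap.det (L.symm : X →ₗ[ℝ] X)| : ℝ) : ℂ) ^ (-lam) ≠ 0 :=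
    Complex.cpow_ne_zero_iff.2 (.inl (Complex.ofReal_ne_zero.2
      (abs_ne_zero.2 L.symm.toLinearEquiv.isUnit_det'.ne_zero)))
  refine (V.smul_mem_iff hscalar).1 ?_
  simpa only [affineOperator_apply, neg_neg, ContinuousLinearEquiv.symm_symm]
    using hinv L.symm (-c) f hf

end AffineOperator

theorem statement9_general {G X : Type*} [Group G] [NormedAddCommGroup X] [NormedSpace ℝ X]
    [FiniteDimensional ℝ X] [MeasurableSpace X] [BorelSpace X] (μ : Measure X)
    [μ.IsAddHaarMeasure] (ρ : G →* (X ≃L[ℝ] X)) (hρ : Function.Surjective ρ) (lam : ℂ)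
    (hlam : lam.re = 1 / 2) (π : G × X → Lp ℂ 2 μ →L[ℂ] Lp ℂ 2 μ)
    (hπ : ∀ a b f, π (a, b) f =ᵐ[μ] fun x =>
      ((|LinearMap.det (ρ a : X →ₗ[ℝ] X)| : ℝ) : ℂ) ^ (-lam) * f (ρ a⁻¹ (x - b))) :
    (∀ g f, ‖π g f‖ = ‖f‖) ∧
    (∀ g, Function.Bijective (π g)) ∧
    (∀ a₁ a₂ b₁ b₂, π (a₁ * a₂, ρ a₁ b₂ + b₁) = (π (a₁, b₁)).comp (π (a₂, b₂))) ∧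
    (∀ V : Submodule ℂ (Lp ℂ 2 μ), IsClosed (V : Set (Lp ℂ 2 μ)) →
      (∀ g f, f ∈ V → π g f ∈ V) → V = ⊥ ∨ V = ⊤) := by
  have hπ_eq (a b) : π (a, b) = affineOperator μ lam (ρ a) b := by
    ext1 f
    refine Lp.ext ((hπ a b f).trans ?_)
    rw [map_inv]
    exact (coeFn_affineOperator lam (ρ a) b f).symm
  refine ⟨fun ⟨a, b⟩ f => ?_, fun ⟨a, b⟩ => ?_, fun a₁ a₂ b₁ b₂ => ?_, fun V hV hinv => ?_⟩
  · rw [hπ_eq, norm_affineOperator hlam]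
  · rw [hπ_eq]
    exact affineOperator_bijective lam (ρ a) b
  · simp only [hπ_eq, map_mul]
    exact affineOperator_trans lam (ρ a₁) (ρ a₂) b₁ b₂
  · refine eq_bot_or_eq_top_of_affineOperator_invariant lam hV (hρ.forall.2 fun a b f hf => ?_)
    rw [← hπ_eq]
    exact hinv (a, b) f hf

/-- An invertible matrix `A` as the linear homeomorphism `x ↦ A *ᵥ x` of the space of column
vectors. -/
noncomputable def mulVecContinuousEquiv (𝕜 n : Type*) [NontriviallyNormedField 𝕜] [CompleteSpace 𝕜]
    [Fintype n] [DecidableEq n] : GL n 𝕜 ≃* ((n → 𝕜) ≃L[𝕜] (n → 𝕜)) :=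
  (Units.mapEquiv
    (toLinAlgEquiv'.trans (Module.End.toContinuousLinearMap (n → 𝕜))).toMulEquiv).trans
    (ContinuousLinearEquiv.unitsEquiv 𝕜 (n → 𝕜))

lemma det_mulVecContinuousEquiv {𝕜 n : Type*} [NontriviallyNormedField 𝕜] [CompleteSpace 𝕜]
    [Fintype n] [DecidableEq n] (A : GL n 𝕜) :
    LinearMap.det (mulVecContinuousEquiv 𝕜 n A : (n → 𝕜) →ₗ[𝕜] (n → 𝕜)) =
      (A : Matrix n n 𝕜).det :=
  LinearMap.det_toLin' (A : Matrix n n 𝕜)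

/-- Let `G = Aff(m) = GL(m,ℝ) ⋉ ℝᵐ` and, for `λ ∈ ℂ`, let `π` be
(given, a.e., by) `π_{(A,b)}[f](x) = |det A|^{-λ} f(A⁻¹(x - b))` on `L²(ℝᵐ)`, where
`|det A|^{-λ}` is the complex power.  If `Re λ = 1/2` then `π` is an irreducible unitary
representation: each `π_g` is unitary (isometric and bijective), `π` is a group
homomorphism with respect to the affine group law
`(A₁,b₁)·(A₂,b₂) = (A₁A₂, A₁b₂ + b₁)`, and the only closed `π`-invariant subspaces of
`L²(ℝᵐ)` are `{0}` and `L²(ℝᵐ)`. -/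
theorem statement9 (m : ℕ) (lam : ℂ) (hlam : lam.re = 1 / 2)
    (π : GL (Fin m) ℝ × (Fin m → ℝ) →
      Lp ℂ 2 (volume : Measure (Fin m → ℝ)) →L[ℂ] Lp ℂ 2 (volume : Measure (Fin m → ℝ)))
    (hπ : ∀ (A : GL (Fin m) ℝ) (b : Fin m → ℝ)
        (f : Lp ℂ 2 (volume : Measure (Fin m → ℝ))),
      ⇑(π (A, b) f) =ᵐ[volume] fun x =>
        (((|((↑A : Matrix (Fin m) (Fin m) ℝ)).det| : ℝ) : ℂ) ^ (-lam)) *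
          f ((↑A⁻¹ : Matrix (Fin m) (Fin m) ℝ) *ᵥ (x - b))) :
    (∀ (g : GL (Fin m) ℝ × (Fin m → ℝ)) (f : Lp ℂ 2 (volume : Measure (Fin m → ℝ))),
        ‖π g f‖ = ‖f‖) ∧
    (∀ g : GL (Fin m) ℝ × (Fin m → ℝ), Function.Bijective (π g)) ∧
    (∀ (A₁ A₂ : GL (Fin m) ℝ) (b₁ b₂ : Fin m → ℝ),
        π (A₁ * A₂, (↑A₁ : Matrix (Fin m) (Fin m) ℝ) *ᵥ b₂ + b₁) =
          (π (A₁, b₁)).comp (π (A₂, b₂))) ∧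
    (∀ V : Submodule ℂ (Lp ℂ 2 (volume : Measure (Fin m → ℝ))),
        IsClosed (V : Set (Lp ℂ 2 (volume : Measure (Fin m → ℝ)))) →
        (∀ (g : GL (Fin m) ℝ × (Fin m → ℝ))
            (f : Lp ℂ 2 (volume : Measure (Fin m → ℝ))), f ∈ V → π g f ∈ V) →
        V = ⊥ ∨ V = ⊤) := by
  refine statement9_general volume (mulVecContinuousEquiv ℝ (Fin m)).toMonoidHom
    (mulVecContinuousEquiv ℝ (Fin m)).surjective lam hlam π fun A b f => ?_
  simp only [← det_mulVecContinuousEquiv] at hπ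
  exact hπ A b f
end

section
/- Let G := O(m) × Aff(m) = O(m) × (GL(m,ℝ) ⋉ ℝᵐ) and define π : G → U(L²(ℝᵐ; ℝᵐ)) on vector-valued square-integrable functions f : ℝᵐ → ℝᵐ by π_{(Q,L,t)}[f](x) := |det L|^{−1/2} Q f(L⁻¹(x − t)). Then π is an irreducible unitary representation: its only closed invariant subspaces are {0} and L²(ℝᵐ; ℝᵐ). -/
open MeasureTheory Matrix

/-!
Suppose `V` is closed and invariant, and that `f ∈ V` and `g ∈ Vᗮ` are both nonzero. Every rank-one
operator `x ↦ ⟪b, x⟫ a` is a multiple of the difference of two isometries, so every component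
`u = ⟪a, g⟫` is orthogonal to all affine pullbacks of every component `v = ⟪b, f⟫`. The Fourier
transform turns translations into characters: orthogonality to all translates of `v ∘ L⁻¹` says
that the Fourier transform of the integrable function `ξ ↦ conj (û ξ) * v̂ (M ξ)` vanishes, where
`M` is the adjoint of `L`. Hence for every invertible `M`, almost every `ξ` satisfies `û ξ = 0` or
`v̂ (M ξ) = 0`. Applying Fubini to the transvections `M ξ = ξ + φ ξ • y`, with `y` as second
variable, shows that `û` or `v̂` vanishes almost everywhere. As `a` and `b` are arbitrary, `f` or
`g` is zero.
-/

open scoped FourierTransform SchwartzMap InnerProductSpace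

section LinearEquivalences

variable {E : Type*} [NormedAddCommGroup E] [NormedSpace ℝ E]

lemma abs_det_continuousLinearEquiv_pos (L : E ≃L[ℝ] E) : 0 < |(L : E →L[ℝ] E).det| :=
  abs_pos.2 L.toLinearEquiv.isUnit_det'.ne_zero

lemma exists_continuousLinearEquiv_transvection [FiniteDimensional ℝ E] {φ : E →ₗ[ℝ] ℝ} {y : E}
    (h : φ y ≠ -1) : ∃ M : E ≃L[ℝ] E, ∀ ξ, M ξ = ξ + φ ξ • y := by
  have hdet : (LinearMap.transvection φ y).det ≠ 0 := by
    rw [LinearMap.transvection.det]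
    exact fun h' => h (by linarith)
  exact ⟨(LinearMap.equivOfDetNeZero _ hdet).toContinuousLinearEquiv, fun _ => rfl⟩

end LinearEquivalences

section AddHaar

variable {E F : Type*} [NormedAddCommGroup E] [NormedSpace ℝ E] [FiniteDimensional ℝ E]
  [MeasurableSpace E] [BorelSpace E] [NormedAddCommGroup F]
  {μ : Measure E} [μ.IsAddHaarMeasure]

lemma map_continuousLinearEquiv_eq_smul_addHaar (L : E ≃L[ℝ] E) :
    μ.map L = ENNReal.ofReal |(L : E →L[ℝ] E).det|⁻¹ • μ := by
  rw [← abs_inv]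
  exact Measure.map_linearMap_addHaar_eq_smul_addHaar μ L.toLinearEquiv.isUnit_det'.ne_zero

lemma integral_comp_continuousLinearEquiv_s11 [NormedSpace ℝ F] (L : E ≃L[ℝ] E) (f : E → F) :
    ∫ x, f (L x) ∂μ = |(L : E →L[ℝ] E).det|⁻¹ • ∫ x, f x ∂μ := by
  have hmap : ∫ x, f x ∂μ.map L = ∫ x, f (L x) ∂μ :=
    L.toHomeomorph.measurableEmbedding.integral_map f
  rw [← hmap, map_continuousLinearEquiv_eq_smul_addHaar, integral_smul_measure,
    ENNReal.toReal_ofReal (inv_nonneg.2 (abs_nonneg _))]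

lemma memLp_comp_continuousLinearEquiv_s11 {p : ENNReal} {f : E → F} (hf : MemLp f p μ)
    (L : E ≃L[ℝ] E) : MemLp (fun x => f (L x)) p μ := by
  have hfL : MemLp f p (μ.map L) := by
    rw [map_continuousLinearEquiv_eq_smul_addHaar]
    exact hf.smul_measure ENNReal.ofReal_ne_top
  exact hfL.comp_of_map L.continuous.aemeasurable

lemma memLp_comp_affine {p : ENNReal} {f : E → F} (hf : MemLp f p μ) (L : E ≃L[ℝ] E) (t : E) :
    MemLp (fun x => f (L (x - t))) p μ :=
  (memLp_comp_continuousLinearEquiv_s11 hf L).comp_measurePreserving (measurePreserving_sub_right μ t)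

lemma quasiMeasurePreserving_affine (L : E ≃L[ℝ] E) (t : E) :
    Measure.QuasiMeasurePreserving (fun x => L (x - t)) μ μ :=
  (Measure.ContinuousLinearMap.quasiMeasurePreserving μ (L : E →L[ℝ] E)
    L.toLinearEquiv.isUnit_det'.ne_zero).comp
    (measurePreserving_sub_right μ t).quasiMeasurePreserving

lemma ae_linearMap_ne {φ : E →ₗ[ℝ] ℝ} (hφ : φ ≠ 0) (c : ℝ) : ∀ᵐ x ∂μ, φ x ≠ c := by
  obtain ⟨x₀, rfl⟩ := LinearMap.surjective hφ c
  have hker : AffineSubspace.mk' x₀ φ.ker ≠ ⊤ := fun h =>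
    hφ (LinearMap.ker_eq_top.1 (by simpa using congrArg AffineSubspace.direction h))
  have hset : {x | ¬φ x ≠ φ x₀} = (AffineSubspace.mk' x₀ φ.ker : Set E) := by
    ext x
    simp [AffineSubspace.mem_mk', sub_eq_zero]
  rw [ae_iff, hset]
  exact Measure.addHaar_affineSubspace μ _ hker

lemma ae_mem_of_ae_add_smul_mem {t : Set E} {c : ℝ} (hc : c ≠ 0) (x : E)
    (h : ∀ᵐ y ∂μ, x + c • y ∈ t) : ∀ᵐ z ∂μ, z ∈ t := by
  have hqmp : Measure.QuasiMeasurePreserving (fun z => c⁻¹ • (z - x)) μ μ :=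
    quasiMeasurePreserving_affine (ContinuousLinearEquiv.smulLeft (Units.mk0 c hc)⁻¹) x
  filter_upwards [hqmp.ae h] with z hz
  rwa [smul_inv_smul₀ hc, add_sub_cancel] at hz

/-- The transvections `ξ ↦ ξ + φ ξ • y` with `φ ≠ 0` fixed suffice: for almost every `ξ` the map
`y ↦ ξ + φ ξ • y` is an affine bijection, so Fubini separates `ξ` from its image. -/
lemma ae_mem_or_ae_mem_of_forall_continuousLinearEquiv {s t : Set E} (hs : MeasurableSet s)
    (ht : MeasurableSet t) (h : ∀ M : E ≃L[ℝ] E, ∀ᵐ ξ ∂μ, ξ ∈ s ∨ M ξ ∈ t) :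
    (∀ᵐ ξ ∂μ, ξ ∈ s) ∨ ∀ᵐ ξ ∂μ, ξ ∈ t := by
  rcases subsingleton_or_nontrivial E with _ | _
  · obtain ⟨ξ, hξ⟩ := (h (.refl ℝ E)).exists
    exact hξ.imp (fun hξs => ae_of_all _ fun η => Subsingleton.elim ξ η ▸ hξs)
      fun hξt => ae_of_all _ fun η => Subsingleton.elim ξ η ▸ hξt
  obtain ⟨φ, hφ⟩ := exists_ne (0 : Module.Dual ℝ E)
  have hφ_meas : Measurable φ := (LinearMap.continuous_of_finiteDimensional φ).measurable
  have hyξ : ∀ᵐ y ∂μ, ∀ᵐ ξ ∂μ, ξ ∈ s ∨ ξ + φ ξ • y ∈ t := by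
    filter_upwards [ae_linearMap_ne hφ (-1)] with y hy
    obtain ⟨M, hM⟩ := exists_continuousLinearEquiv_transvection hy
    simpa only [hM] using h M
  have hmeas : MeasurableSet {p : E × E | p.2 ∈ s ∨ p.2 + φ p.2 • p.1 ∈ t} :=
    (measurable_snd hs).union
      ((measurable_snd.add ((hφ_meas.comp measurable_snd).smul measurable_fst)) ht)
  have hξy : ∀ᵐ ξ ∂μ, ∀ᵐ y ∂μ, ξ ∈ s ∨ ξ + φ ξ • y ∈ t := (Measure.ae_ae_comm hmeas).1 hyξ
  refine or_iff_not_imp_left.2 fun hns => ?_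
  obtain ⟨ξ, hξs, hξt, hφξ⟩ :=
    ((Filter.not_eventually.1 hns).and_eventually (hξy.and (ae_linearMap_ne hφ 0))).exists
  exact ae_mem_of_ae_add_smul_mem hφξ ξ (hξt.mono fun y hy => hy.resolve_left hξs)

end AddHaar

section IsometrySpan

variable {F : Type*} [NormedAddCommGroup F] [InnerProductSpace ℝ F]

variable (F) in
/-- The real linear span, inside the continuous endomorphisms of `F`, of the linear isometric
automorphisms of `F`. -/
def isometrySpan : Submodule ℝ (F →L[ℝ] F) :=
  Submodule.span ℝ (Set.range fun R : F ≃ₗᵢ[ℝ] F => ((R : F ≃L[ℝ] F) : F →L[ℝ] F))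

/-- With `R` the reflection taking `b` to `a` and `D` the reflection in the hyperplane `aᗮ`, the
difference `R - D ∘ R` is twice the projection onto the line of `a` after `R`. -/
lemma rankOne_mem_isometrySpan_of_norm_eq {a b : F} (h : ‖b‖ = ‖a‖) :
    InnerProductSpace.rankOne ℝ a b ∈ isometrySpan F := by
  set R : F ≃ₗᵢ[ℝ] F := (ℝ ∙ (b - a))ᗮ.reflection
  set D : F ≃ₗᵢ[ℝ] F := (ℝ ∙ a)ᗮ.reflection
  have hRb : R b = a := Submodule.reflection_sub h
  have hinner (x : F) : ⟪a, R x⟫_ℝ = ⟪b, x⟫_ℝ := by rw [← hRb, R.inner_map_map]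
  have hD (x : F) : x - D x = (2 * (⟪a, x⟫_ℝ / ‖a‖ ^ 2)) • a := by
    rw [Submodule.reflection_orthogonal_apply, Submodule.reflection_singleton_apply]
    simp only [RCLike.ofReal_real_eq_id, id_eq]
    module
  have hdecomp : InnerProductSpace.rankOne ℝ a b = (‖a‖ ^ 2 / 2) •
      (((R : F ≃L[ℝ] F) : F →L[ℝ] F) - (((R.trans D : F ≃ₗᵢ[ℝ] F) : F ≃L[ℝ] F) : F →L[ℝ] F)) := by
    ext x
    change ⟪b, x⟫_ℝ • a = (‖a‖ ^ 2 / 2) • (R x - D (R x))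
    rw [hD, hinner, smul_smul]
    rcases eq_or_ne a 0 with rfl | ha
    · simp
    · congr 1
      have := norm_ne_zero_iff.2 ha
      field_simp
  rw [hdecomp]
  exact Submodule.smul_mem _ _ (Submodule.sub_mem _ (Submodule.subset_span ⟨R, rfl⟩)
    (Submodule.subset_span ⟨R.trans D, rfl⟩))

lemma rankOne_mem_isometrySpan (a b : F) : InnerProductSpace.rankOne ℝ a b ∈ isometrySpan F := by
  by_cases hab : ‖a‖ * ‖b‖ = 0
  · rcases mul_eq_zero.1 hab with h | h <;> simp [norm_eq_zero.1 h]
  · have hscaled := rankOne_mem_isometrySpan_of_norm_eq (a := ‖b‖ • a) (b := ‖a‖ • b)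
      (by simp [norm_smul, mul_comm])
    rw [map_smul, map_smulₛₗ, _root_.smul_apply, smul_smul] at hscaled
    exact (Submodule.smul_mem_iff _ (by simpa [mul_comm] using hab)).1 hscaled

end IsometrySpan

section AffinePullback

variable {E F G : Type*} [NormedAddCommGroup E] [NormedSpace ℝ E] [FiniteDimensional ℝ E]
  [MeasurableSpace E] [BorelSpace E] [NormedAddCommGroup F] [NormedAddCommGroup G]
  {p : ENNReal} {μ : Measure E} [μ.IsAddHaarMeasure]

/-- The action of the affine group of `E` on `Lp` functions, without normalisation: the pullback
of `f` along the inverse of `x ↦ L x + t`, that is `x ↦ f (L⁻¹ (x - t))`. -/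
noncomputable def affinePullback (L : E ≃L[ℝ] E) (t : E) (f : Lp F p μ) : Lp F p μ :=
  (memLp_comp_affine (Lp.memLp f) L.symm t).toLp _

lemma coeFn_affinePullback (L : E ≃L[ℝ] E) (t : E) (f : Lp F p μ) :
    affinePullback L t f =ᵐ[μ] fun x => f (L.symm (x - t)) :=
  MemLp.coeFn_toLp _

lemma compLp_affinePullback [NormedSpace ℝ F] [NormedSpace ℝ G] (T : F →L[ℝ] G)
    (L : E ≃L[ℝ] E) (t : E) (f : Lp F p μ) :
    T.compLp (affinePullback L t f) = affinePullback L t (T.compLp f) := by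
  refine Lp.ext ?_
  filter_upwards [T.coeFn_compLp (affinePullback L t f), coeFn_affinePullback L t f,
    coeFn_affinePullback L t (T.compLp f),
    (quasiMeasurePreserving_affine L.symm t).ae (T.coeFn_compLp f)] with x h₁ h₂ h₃ h₄
  rw [h₁, h₂, h₃, h₄]

lemma integral_smul_affinePullback [NormedSpace ℂ F] (L : E ≃L[ℝ] E) (t : E) (φ : E → ℂ)
    (f : Lp F p μ) :
    ∫ x, φ x • affinePullback L t f x ∂μ =
      |(L : E →L[ℝ] E).det| • ∫ y, φ (L y + t) • f y ∂μ := by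
  calc ∫ x, φ x • affinePullback L t f x ∂μ
      = ∫ x, φ x • f (L.symm (x - t)) ∂μ :=
        integral_congr_ae ((coeFn_affinePullback L t f).mono fun x hx => by simp only [hx])
    _ = ∫ x, φ (x + t) • f (L.symm x) ∂μ := by
        rw [← integral_add_right_eq_self _ t]
        simp only [add_sub_cancel_right]
    _ = |(L : E →L[ℝ] E).det| • ∫ y, φ (L y + t) • f y ∂μ := by
        have hL := integral_comp_continuousLinearEquiv_s11 (μ := μ) L
          fun x => φ (x + t) • f (L.symm x)
        simp only [ContinuousLinearEquiv.symm_apply_apply] at hL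
        rw [hL, smul_inv_smul₀ (abs_det_continuousLinearEquiv_pos L).ne']

end AffinePullback

section SchwartzTest

variable {E F : Type*} [NormedAddCommGroup E] [MeasurableSpace E] [BorelSpace E]
  [NormedAddCommGroup F] [NormedSpace ℂ F] [CompleteSpace F]

lemma ae_eq_of_forall_integral_schwartz_smul_eq [NormedSpace ℝ E] [FiniteDimensional ℝ E]
    {μ : Measure E} {f g : E → F} (hf : LocallyIntegrable f μ) (hg : LocallyIntegrable g μ)
    (h : ∀ φ : 𝓢(E, ℂ), ∫ x, φ x • f x ∂μ = ∫ x, φ x • g x ∂μ) : f =ᵐ[μ] g := by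
  refine ae_eq_of_integral_contDiff_smul_eq hf hg fun φ hφ hφ_supp => ?_
  have hφ_supp' : HasCompactSupport fun x => (φ x : ℂ) := hφ_supp.comp_left Complex.ofReal_zero
  simpa using! h (hφ_supp'.toSchwartzMap (Complex.ofRealCLM.contDiff.comp hφ))

variable [InnerProductSpace ℝ E] [FiniteDimensional ℝ E]

lemma ae_eq_zero_of_fourier_eq_zero_s11 {h : E → F} (hh : Integrable h) (h0 : ∀ t, 𝓕 h t = 0) :
    h =ᵐ[volume] 0 := by
  refine ae_eq_of_forall_integral_schwartz_smul_eq hh.locallyIntegrable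
    locallyIntegrable_zero fun φ => ?_
  have hparseval := VectorFourier.integral_fourierIntegral_smul_eq_flip (μ := (volume : Measure E))
    (ν := (volume : Measure E)) (L := innerₗ E) (f := (𝓕⁻ φ : 𝓢(E, ℂ)))
    Real.continuous_fourierChar continuous_inner (𝓕⁻ φ : 𝓢(E, ℂ)).integrable hh
  rw [flip_innerₗ] at hparseval
  calc ∫ x, φ x • h x = ∫ x, (𝓕 (𝓕⁻ φ) : 𝓢(E, ℂ)) x • h x := by
        rw [FourierTransform.fourier_fourierInv_eq]
    _ = ∫ x, (𝓕⁻ φ : 𝓢(E, ℂ)) x • 𝓕 h x := hparseval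
    _ = ∫ x, φ x • (0 : E → F) x := by simp [h0]

end SchwartzTest

section Adjoint

variable {E : Type*} [NormedAddCommGroup E] [InnerProductSpace ℝ E] [FiniteDimensional ℝ E]

/-- The adjoint of an invertible operator on `E`, bundled as an invertible operator. -/
noncomputable def adjointEquiv (M : E ≃L[ℝ] E) : E ≃L[ℝ] E :=
  (LinearEquiv.ofLinearMap (LinearMap.adjoint M.toLinearEquiv.toLinearMap)
    (LinearMap.adjoint M.symm.toLinearEquiv.toLinearMap)
    (by simp [← LinearMap.adjoint_comp])
    (by simp [← LinearMap.adjoint_comp])).toContinuousLinearEquiv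

lemma inner_adjointEquiv_left (M : E ≃L[ℝ] E) (x y : E) :
    ⟪adjointEquiv M x, y⟫_ℝ = ⟪x, M y⟫_ℝ :=
  LinearMap.adjoint_inner_left _ _ _

end Adjoint

section Fourier

variable {E F : Type*} [NormedAddCommGroup E] [InnerProductSpace ℝ E]
  [MeasurableSpace E] [BorelSpace E] [NormedAddCommGroup F]

lemma memLp_fourierChar_smul [NormedSpace ℂ F] {p : ENNReal} {μ : Measure E} {f : E → F}
    (hf : MemLp f p μ) (t : E) :
    MemLp (fun ξ => 𝐞 (-⟪ξ, t⟫_ℝ) • f ξ) p μ := by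
  have hchar : Continuous fun ξ : E => (𝐞 (-⟪ξ, t⟫_ℝ) : ℂ) := by fun_prop
  exact hf.of_le (hchar.aestronglyMeasurable.smul hf.1)
    (.of_forall fun ξ => (Circle.norm_smul _ _).le)

variable [FiniteDimensional ℝ E]

lemma fourierInv_comp_affine [NormedSpace ℂ F] (M : E ≃L[ℝ] E) (t : E)
    (f : E → F) (y : E) :
    𝓕⁻ (fun x => f (adjointEquiv M x + t)) (M y) =
      |(adjointEquiv M : E →L[ℝ] E).det|⁻¹ • 𝐞 (-⟪y, t⟫_ℝ) • 𝓕⁻ f y := by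
  calc 𝓕⁻ (fun x => f (adjointEquiv M x + t)) (M y)
      = ∫ x, 𝐞 ⟪adjointEquiv M x, y⟫_ℝ • f (adjointEquiv M x + t) := by
        simp only [Real.fourierInv_eq, inner_adjointEquiv_left]
    _ = |(adjointEquiv M : E →L[ℝ] E).det|⁻¹ • ∫ x, 𝐞 ⟪x, y⟫_ℝ • f (x + t) :=
        integral_comp_continuousLinearEquiv_s11 (adjointEquiv M)
          fun x => 𝐞 ⟪x, y⟫_ℝ • f (x + t)
    _ = |(adjointEquiv M : E →L[ℝ] E).det|⁻¹ • ∫ x, 𝐞 ⟪x - t, y⟫_ℝ • f x := by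
        rw [← integral_sub_right_eq_self _ t]
        simp only [sub_add_cancel]
    _ = |(adjointEquiv M : E →L[ℝ] E).det|⁻¹ • 𝐞 (-⟪y, t⟫_ℝ) • 𝓕⁻ f y := by
        have hchar (x : E) : 𝐞 ⟪x - t, y⟫_ℝ =
            𝐞 (-⟪y, t⟫_ℝ) * 𝐞 ⟪x, y⟫_ℝ := by
          rw [← AddChar.map_add_eq_mul, inner_sub_left, real_inner_comm y t, neg_add_eq_sub]
        simp only [hchar, mul_smul, Real.fourierInv_eq, Circle.smul_def, integral_smul]

variable [InnerProductSpace ℂ F] [CompleteSpace F]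

lemma integral_schwartz_smul_fourier (φ : 𝓢(E, ℂ)) (w : Lp F 2 (volume : Measure E)) :
    ∫ x, φ x • (𝓕 w : Lp F 2 (volume : Measure E)) x = ∫ x, (𝓕 φ) x • w x := by
  have h := congrArg (· φ) (Lp.fourier_toTemperedDistribution_eq w)
  simpa only [TemperedDistribution.fourier_apply, Lp.toTemperedDistribution_apply] using h.symm

/-- Tested against a Schwartz function `φ`, both sides become integrals of `w` against the
composition of `𝓕 φ` with an affine map. -/
lemma fourier_affinePullback (M : E ≃L[ℝ] E) (t : E) (w : Lp F 2 (volume : Measure E)) :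
    (𝓕 (affinePullback (adjointEquiv M) t w) : Lp F 2 (volume : Measure E)) =ᵐ[volume] fun ξ =>
      |(M : E →L[ℝ] E).det| • 𝐞 (-⟪ξ, t⟫_ℝ) •
        (𝓕 w : Lp F 2 (volume : Measure E)) (M ξ) := by
  set L := adjointEquiv M
  set W : Lp F 2 (volume : Measure E) := 𝓕 w
  have hWM : MemLp (fun ξ => W (M ξ)) 2 volume :=
    memLp_comp_continuousLinearEquiv_s11 (Lp.memLp W) M
  refine ae_eq_of_forall_integral_schwartz_smul_eq
    ((Lp.memLp _).locallyIntegrable one_le_two)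
    (((memLp_fourierChar_smul hWM t).const_smul _).locallyIntegrable one_le_two) fun φ => ?_
  set ψ : 𝓢(E, ℂ) := SchwartzMap.compCLMOfContinuousLinearEquiv ℂ L
    ((𝓕 φ).compSubConstCLM ℂ (-t)) with hψ_def
  have hψ : ⇑ψ = fun x => 𝓕 φ (L x + t) := by ext x; simp [hψ_def]
  have hψM (ξ : E) : (𝓕⁻ ψ) (M ξ) =
      |(L : E →L[ℝ] E).det|⁻¹ • 𝐞 (-⟪ξ, t⟫_ℝ) • φ ξ := by
    rw [SchwartzMap.fourierInv_coe, hψ, fourierInv_comp_affine, ← SchwartzMap.fourierInv_coe,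
      FourierTransform.fourierInv_fourier_eq]
  calc ∫ x, φ x • (𝓕 (affinePullback L t w) : Lp F 2 (volume : Measure E)) x
      = |(L : E →L[ℝ] E).det| • ∫ x, ψ x • w x := by
        rw [integral_schwartz_smul_fourier, integral_smul_affinePullback, hψ]
    _ = |(L : E →L[ℝ] E).det| • ∫ x, (𝓕⁻ ψ) x • W x := by
        rw [integral_schwartz_smul_fourier, FourierTransform.fourier_fourierInv_eq]
    _ = |(L : E →L[ℝ] E).det| • |(M : E →L[ℝ] E).det| • ∫ ξ, (𝓕⁻ ψ) (M ξ) • W (M ξ) := by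
        rw [integral_comp_continuousLinearEquiv_s11 M
          fun x => (𝓕⁻ ψ : 𝓢(E, ℂ)) x • W x,
          smul_inv_smul₀ (abs_det_continuousLinearEquiv_pos M).ne']
    _ = ∫ ξ, φ ξ • |(M : E →L[ℝ] E).det| • 𝐞 (-⟪ξ, t⟫_ℝ) • W (M ξ) := by
        rw [← integral_smul, ← integral_smul]
        congr 1 with ξ
        rw [hψM, smul_assoc, smul_comm |(M : E →L[ℝ] E).det|,
          smul_inv_smul₀ (abs_det_continuousLinearEquiv_pos L).ne']
        simp only [Circle.smul_def, smul_eq_mul, mul_smul, smul_comm (φ ξ)]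

lemma inner_fourier_comp_eq_zero_of_forall_affinePullback (M : E ≃L[ℝ] E)
    {u v : Lp F 2 (volume : Measure E)}
    (h : ∀ t, ⟪u, affinePullback (adjointEquiv M) t v⟫_ℂ = 0) :
    ∀ᵐ ξ, ⟪(𝓕 u : Lp F 2 (volume : Measure E)) ξ,
      (𝓕 v : Lp F 2 (volume : Measure E)) (M ξ)⟫_ℂ = 0 := by
  set U : Lp F 2 (volume : Measure E) := 𝓕 u with hU
  set W : Lp F 2 (volume : Measure E) := 𝓕 v
  have hWM : MemLp (fun ξ => W (M ξ)) 2 volume :=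
    memLp_comp_continuousLinearEquiv_s11 (Lp.memLp W) M
  have hint : Integrable (fun ξ => ⟪U ξ, W (M ξ)⟫_ℂ) := by
    refine (L2.integrable_inner (𝕜 := ℂ) U (hWM.toLp _)).congr ?_
    filter_upwards [hWM.coeFn_toLp] with ξ hξ
    rw [hξ]
  refine ae_eq_zero_of_fourier_eq_zero_s11 hint fun t => ?_
  refine (smul_eq_zero.1 ?_).resolve_left (abs_det_continuousLinearEquiv_pos M).ne'
  calc |(M : E →L[ℝ] E).det| • 𝓕 (fun ξ => ⟪U ξ, W (M ξ)⟫_ℂ) t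
      = ∫ ξ, ⟪U ξ, |(M : E →L[ℝ] E).det| • 𝐞 (-⟪ξ, t⟫_ℝ) • W (M ξ)⟫_ℂ := by
        rw [Real.fourier_eq, ← integral_smul]
        congr 1 with ξ
        rw [inner_smul_right_eq_smul, Circle.smul_def, Circle.smul_def, inner_smul_right_eq_smul]
    _ = ⟪U, (𝓕 (affinePullback (adjointEquiv M) t v) : Lp F 2 (volume : Measure E))⟫_ℂ := by
        rw [L2.inner_def]
        refine integral_congr_ae ?_
        filter_upwards [fourier_affinePullback M t v] with ξ hξ
        rw [hξ]
    _ = 0 := by rw [hU, Lp.inner_fourier_eq, h t]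

lemma eq_zero_of_ae_fourier_eq_zero {w : Lp F 2 (volume : Measure E)}
    (hw : ∀ᵐ ξ, (𝓕 w : Lp F 2 (volume : Measure E)) ξ = 0) : w = 0 := by
  rw [← norm_eq_zero, ← Lp.norm_fourier_eq, norm_eq_zero]
  exact Lp.eq_zero_iff_ae_eq_zero.2 hw

lemma eq_zero_or_eq_zero_of_forall_inner_affinePullback {u v : Lp ℂ 2 (volume : Measure E)}
    (h : ∀ (L : E ≃L[ℝ] E) (t : E), ⟪u, affinePullback L t v⟫_ℂ = 0) : u = 0 ∨ v = 0 := by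
  set U : Lp ℂ 2 (volume : Measure E) := 𝓕 u
  set W : Lp ℂ 2 (volume : Measure E) := 𝓕 v
  have hUW (M : E ≃L[ℝ] E) : ∀ᵐ ξ, U ξ = 0 ∨ W (M ξ) = 0 := by
    filter_upwards [inner_fourier_comp_eq_zero_of_forall_affinePullback M (h (adjointEquiv M))]
      with ξ hξ
    simpa [or_comm] using hξ
  have hzero (w : Lp ℂ 2 (volume : Measure E)) : MeasurableSet {ξ | w ξ = 0} :=
    (Lp.stronglyMeasurable w).measurable (measurableSet_singleton 0)
  exact (ae_mem_or_ae_mem_of_forall_continuousLinearEquiv (hzero U) (hzero W) hUW).imp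
    eq_zero_of_ae_fourier_eq_zero eq_zero_of_ae_fourier_eq_zero

end Fourier

section ComplexComponent

variable {X F : Type*} [MeasurableSpace X] {μ : Measure X}
  [NormedAddCommGroup F] [InnerProductSpace ℝ F]

/-- The component `x ↦ ⟪a, f x⟫` of an `F`-valued `L²` function `f` along `a : F`. It is regarded
as complex valued because the Fourier transform on `L²` is only available over `ℂ`. -/
noncomputable def complexComponent (a : F) (f : Lp F 2 μ) : Lp ℂ 2 μ :=
  (Complex.ofRealCLM ∘L innerSL ℝ a).compLp f

lemma coeFn_complexComponent (a : F) (f : Lp F 2 μ) :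
    complexComponent a f =ᵐ[μ] fun x => (⟪a, f x⟫_ℝ : ℂ) :=
  (Complex.ofRealCLM ∘L innerSL ℝ a).coeFn_compLp f

lemma inner_complexComponent (a b : F) (f g : Lp F 2 μ) :
    ⟪complexComponent a f, complexComponent b g⟫_ℂ =
      (⟪f, (InnerProductSpace.rankOne ℝ a b).compLp g⟫_ℝ : ℂ) := by
  rw [L2.inner_def, L2.inner_def, ← integral_complex_ofReal]
  refine integral_congr_ae ?_
  filter_upwards [coeFn_complexComponent a f, coeFn_complexComponent b g,
    (InnerProductSpace.rankOne ℝ a b).coeFn_compLp g] with x hf hg hr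
  rw [hf, hg, hr, InnerProductSpace.rankOne_apply, inner_smul_right, real_inner_comm (f x) a]
  simp

lemma exists_complexComponent_ne_zero [CompleteSpace F] {f : Lp F 2 μ} (hf : f ≠ 0) :
    ∃ a, complexComponent a f ≠ 0 := by
  by_contra! h
  refine hf (Lp.eq_zero_iff_ae_eq_zero.2 (ae_eq_zero_of_forall_dual_of_isSeparable ℝ
    (Lp.stronglyMeasurable f).isSeparable_range (fun ℓ => ?_) (.of_forall Set.mem_range_self)))
  filter_upwards [Lp.eq_zero_iff_ae_eq_zero.1 (h ((InnerProductSpace.toDual ℝ F).symm ℓ)),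
    coeFn_complexComponent ((InnerProductSpace.toDual ℝ F).symm ℓ) f] with x h₀ hx
  simpa [h₀] using hx.symm

lemma inner_compLp_eq_zero_of_mem_isometrySpan {f g : Lp F 2 μ}
    (h : ∀ R : F ≃ₗᵢ[ℝ] F, ⟪g, ((R : F ≃L[ℝ] F) : F →L[ℝ] F).compLp f⟫_ℝ = 0)
    {T : F →L[ℝ] F} (hT : T ∈ isometrySpan F) : ⟪g, T.compLp f⟫_ℝ = 0 := by
  induction hT using Submodule.span_induction with
  | mem T hT =>
    obtain ⟨R, rfl⟩ := hT
    exact h R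
  | zero =>
    rw [← zero_smul ℝ (0 : F →L[ℝ] F), ContinuousLinearMap.smul_compLp, zero_smul, inner_zero_right]
  | add S T _ _ hS hT => rw [ContinuousLinearMap.add_compLp, inner_add_right, hS, hT, add_zero]
  | smul c T _ hT => rw [ContinuousLinearMap.smul_compLp, inner_smul_right, hT, mul_zero]

end ComplexComponent

section AffineRep

variable {E F : Type*} [NormedAddCommGroup E] [InnerProductSpace ℝ E] [FiniteDimensional ℝ E]
  [MeasurableSpace E] [BorelSpace E] [NormedAddCommGroup F] [InnerProductSpace ℝ F]

/-- The operator `π_{(R,L,t)}` on `L²(E; F)`, with `R` a linear isometric automorphism of `F` in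
place of an orthogonal matrix: `f ↦ |det L|^{-1/2} R f(L⁻¹(x - t))`. -/
noncomputable def affineRep (R : F ≃ₗᵢ[ℝ] F) (L : E ≃L[ℝ] E) (t : E)
    (f : Lp F 2 (volume : Measure E)) : Lp F 2 (volume : Measure E) :=
  |(L : E →L[ℝ] E).det| ^ (-(1 / 2 : ℝ)) •
    ((R : F ≃L[ℝ] F) : F →L[ℝ] F).compLp (affinePullback L t f)

lemma coeFn_affineRep (R : F ≃ₗᵢ[ℝ] F) (L : E ≃L[ℝ] E) (t : E)
    (f : Lp F 2 (volume : Measure E)) :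
    affineRep R L t f =ᵐ[volume] fun x =>
      |(L : E →L[ℝ] E).det| ^ (-(1 / 2 : ℝ)) • R (f (L.symm (x - t))) := by
  filter_upwards [Lp.coeFn_smul (|(L : E →L[ℝ] E).det| ^ (-(1 / 2 : ℝ)))
      (((R : F ≃L[ℝ] F) : F →L[ℝ] F).compLp (affinePullback L t f)),
    ((R : F ≃L[ℝ] F) : F →L[ℝ] F).coeFn_compLp (affinePullback L t f),
    coeFn_affinePullback L t f] with x h₁ h₂ h₃
  rw [affineRep, h₁, Pi.smul_apply, h₂, h₃]
  rfl

lemma complexComponent_affinePullback (a : F) (L : E ≃L[ℝ] E) (t : E)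
    (f : Lp F 2 (volume : Measure E)) :
    complexComponent a (affinePullback L t f) = affinePullback L t (complexComponent a f) :=
  compLp_affinePullback _ L t f

lemma inner_complexComponent_affinePullback_eq_zero {f g : Lp F 2 (volume : Measure E)}
    (h : ∀ R L t, ⟪g, affineRep R L t f⟫_ℝ = 0) (a b : F) (L : E ≃L[ℝ] E) (t : E) :
    ⟪complexComponent a g, affinePullback L t (complexComponent b f)⟫_ℂ = 0 := by
  have hisometry (R : F ≃ₗᵢ[ℝ] F) :
      ⟪g, ((R : F ≃L[ℝ] F) : F →L[ℝ] F).compLp (affinePullback L t f)⟫_ℝ = 0 := by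
    have hR := h R L t
    rw [affineRep, inner_smul_right] at hR
    exact (mul_eq_zero.1 hR).resolve_left
      (Real.rpow_pos_of_pos (abs_det_continuousLinearEquiv_pos L) _).ne'
  rw [← complexComponent_affinePullback, inner_complexComponent,
    inner_compLp_eq_zero_of_mem_isometrySpan hisometry (rankOne_mem_isometrySpan a b),
    Complex.ofReal_zero]

lemma eq_zero_or_eq_zero_of_forall_inner_affineRep [CompleteSpace F]
    {f g : Lp F 2 (volume : Measure E)} (h : ∀ R L t, ⟪g, affineRep R L t f⟫_ℝ = 0) :
    g = 0 ∨ f = 0 := by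
  by_contra! hne
  obtain ⟨a, ha⟩ := exists_complexComponent_ne_zero hne.1
  obtain ⟨b, hb⟩ := exists_complexComponent_ne_zero hne.2
  exact (eq_zero_or_eq_zero_of_forall_inner_affinePullback
    (inner_complexComponent_affinePullback_eq_zero h a b)).elim ha hb

theorem statement11_general [CompleteSpace F] (V : Submodule ℝ (Lp F 2 (volume : Measure E)))
    (hclosed : IsClosed (V : Set (Lp F 2 (volume : Measure E))))
    (hinv : ∀ (R : F ≃ₗᵢ[ℝ] F) (L : E ≃L[ℝ] E) (t : E), ∀ f ∈ V, affineRep R L t f ∈ V) :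
    V = ⊥ ∨ V = ⊤ := by
  have : CompleteSpace V := hclosed.completeSpace_coe
  by_contra! hV
  obtain ⟨f, hfV, hf⟩ := V.ne_bot_iff.1 hV.1
  obtain ⟨g, hgV, hg⟩ := Vᗮ.ne_bot_iff.1 (mt V.orthogonal_eq_bot_iff.1 hV.2)
  have horth (R : F ≃ₗᵢ[ℝ] F) (L : E ≃L[ℝ] E) (t : E) : ⟪g, affineRep R L t f⟫_ℝ = 0 :=
    V.inner_left_of_mem_orthogonal (hinv R L t f hfV) hgV
  exact (eq_zero_or_eq_zero_of_forall_inner_affineRep horth).elim hg hf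

end AffineRep

section Matrix

variable {n : Type*} [Fintype n] [DecidableEq n]

lemma exists_mem_orthogonalGroup_toEuclideanLin_eq
    (R : EuclideanSpace ℝ n ≃ₗᵢ[ℝ] EuclideanSpace ℝ n) :
    ∃ Q ∈ Matrix.orthogonalGroup n ℝ, ∀ x, Matrix.toEuclideanLin Q x = R x := by
  refine ⟨_, R.toMatrix_mem_unitaryGroup (EuclideanSpace.basisFun n ℝ)
    (EuclideanSpace.basisFun n ℝ), fun x => ?_⟩
  rw [Matrix.toEuclideanLin_eq_toLin_orthonormal, Matrix.toLin_toMatrix]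
  rfl

lemma exists_generalLinearGroup_toEuclideanLin_eq
    (L : EuclideanSpace ℝ n ≃L[ℝ] EuclideanSpace ℝ n) :
    ∃ A : GL n ℝ, (A : Matrix n n ℝ).det = (L : EuclideanSpace ℝ n →L[ℝ] EuclideanSpace ℝ n).det ∧
      ∀ x, Matrix.toEuclideanLin (↑A⁻¹ : Matrix n n ℝ) x = L.symm x := by
  have hinv (K : EuclideanSpace ℝ n ≃L[ℝ] EuclideanSpace ℝ n) :
      Matrix.toEuclideanLin.symm K.toLinearEquiv.toLinearMap *
        Matrix.toEuclideanLin.symm K.symm.toLinearEquiv.toLinearMap = (1 : Matrix n n ℝ) := by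
    rw [← Matrix.toLpLin_symm_comp, ← Matrix.toLpLin_symm_id]
    congr 1
    ext1 x
    exact K.apply_symm_apply x
  refine ⟨⟨_, _, hinv L, hinv L.symm⟩, ?_, fun x => ?_⟩
  · rw [← LinearMap.det_toLpLin, LinearEquiv.apply_symm_apply]
    rfl
  · exact congrArg (· x) (LinearEquiv.apply_symm_apply Matrix.toEuclideanLin
      L.symm.toLinearEquiv.toLinearMap)

lemma exists_matrix_coeFn_affineRep
    (R : EuclideanSpace ℝ n ≃ₗᵢ[ℝ] EuclideanSpace ℝ n)
    (L : EuclideanSpace ℝ n ≃L[ℝ] EuclideanSpace ℝ n) :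
    ∃ Q ∈ Matrix.orthogonalGroup n ℝ, ∃ A : GL n ℝ, ∀ (t : EuclideanSpace ℝ n)
      (f : Lp (EuclideanSpace ℝ n) 2 (volume : Measure (EuclideanSpace ℝ n))),
      affineRep R L t f =ᵐ[volume] fun x =>
        |(A : Matrix n n ℝ).det| ^ (-(1 / 2 : ℝ)) • Matrix.toEuclideanLin Q
          (f (Matrix.toEuclideanLin (↑A⁻¹ : Matrix n n ℝ) (x - t))) := by
  obtain ⟨Q, hQ, hQR⟩ := exists_mem_orthogonalGroup_toEuclideanLin_eq R
  obtain ⟨A, hdet, hAL⟩ := exists_generalLinearGroup_toEuclideanLin_eq L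
  refine ⟨Q, hQ, A, fun t f => ?_⟩
  simpa only [hdet, hQR, hAL] using coeFn_affineRep R L t f

end Matrix

/-- Let `G = O(m) × Aff(m)` act on `L²(ℝᵐ; ℝᵐ)` by
`π_{(Q,L,t)}[f](x) = |det L|^{-1/2} Q f(L⁻¹(x - t))`.  Then `π` is irreducible: its only
closed invariant subspaces are `{0}` and `L²(ℝᵐ; ℝᵐ)`. -/
theorem statement11 (m : ℕ)
    (V : Submodule ℝ (Lp (EuclideanSpace ℝ (Fin m)) 2
      (volume : Measure (EuclideanSpace ℝ (Fin m)))))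
    (hclosed : IsClosed (V : Set (Lp (EuclideanSpace ℝ (Fin m)) 2
      (volume : Measure (EuclideanSpace ℝ (Fin m))))))
    (hinv : ∀ (Q : Matrix (Fin m) (Fin m) ℝ), Q ∈ Matrix.orthogonalGroup (Fin m) ℝ →
      ∀ (L : GL (Fin m) ℝ) (t : EuclideanSpace ℝ (Fin m))
        (f h : Lp (EuclideanSpace ℝ (Fin m)) 2
          (volume : Measure (EuclideanSpace ℝ (Fin m)))), f ∈ V →
      (⇑h =ᵐ[volume] fun x =>
        (|((↑L : Matrix (Fin m) (Fin m) ℝ)).det| ^ (-(1 / 2 : ℝ)) : ℝ) •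
          Matrix.toEuclideanLin Q
            (f (Matrix.toEuclideanLin (↑L⁻¹ : Matrix (Fin m) (Fin m) ℝ) (x - t)))) →
      h ∈ V) :
    V = ⊥ ∨ V = ⊤ := by
  refine statement11_general V hclosed fun R L t f hf => ?_
  obtain ⟨Q, hQ, A, hA⟩ := exists_matrix_coeFn_affineRep R L
  exact hinv Q hQ A t f _ hf (hA t f)
end
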